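/- Let S be a commutative ring and P an invertible S-module, i.e. there exists an S-module Q with an S-linear isomorphism P ⊗_S Q ≅ S. Then for every S-module X: the evaluation map ev_X : X → Hom_S(Hom_S(X,S), S), ev_X(x)(f) = f(x), is bijective if and only if the evaluation map ev^P_X : X → Hom_S(Hom_S(X,P), P), ev^P_X(x)(f) = f(x), is bijective; and ev_X is injective if and only if ev^P_X is injective. -/

import Mathlib

/- STATEMENT 17: Let S be a commutative ring and P an invertible S-module (there is an
S-module Q with P ⊗_S Q ≅ S). Then for every S-module X, the evaluation map
ev_X : X → Hom_S(Hom_S(X,S),S) is bijective iff the evaluation map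
ev^P_X : X → Hom_S(Hom_S(X,P),P) is bijective, and ev_X is injective iff ev^P_X is. -/

universe u v w x

open TensorProduct

/-- The evaluation map `X → Hom_S(Hom_S(X,P), P)` with values in `P`, `x ↦ (f ↦ f x)`. -/
def evalFunP (S : Type u) [CommRing S] (X : Type v) [AddCommGroup X] [Module S X]
    (P : Type w) [AddCommGroup P] [Module S P] :
    X → ((X →ₗ[S] P) →ₗ[S] P) := fun x =>
  { toFun := fun f => f x
    map_add' := fun _ _ => rfl
    map_smul' := fun _ _ => rfl }

/-! Tensoring with an invertible module `P` is an autoequivalence, so, writing `X* = Hom(X, S)`, it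
identifies `Hom(X*, S)` with `Hom(X* ⊗ P, S ⊗ P)`. As `P` is finite projective, `X* ⊗ P` is
`Hom(X, P)`, so the target is `Hom(Hom(X, P), P)`. The resulting isomorphism carries evaluation at
`x` to evaluation at `x`, so the two evaluation maps differ by an isomorphism. -/

section Invertible

variable (S : Type u) [CommSemiring S] (P : Type w) [AddCommMonoid P] [Module S P]
  [Module.Invertible S P] (X : Type v) [AddCommMonoid X] [Module S X]

/-- The isomorphism from the dual of `X* = Hom(X, S)` to `Hom(Hom(X, P), P)` for an invertible
module `P`: tensor a functional with `P`, then identify `X* ⊗ P` with `Hom(X, P)` through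
`dualTensorHom` and `S ⊗ P` with `P`. -/
noncomputable def bidualEquivHomHom :
    Module.Dual S (Module.Dual S X) ≃ₗ[S] ((X →ₗ[S] P) →ₗ[S] P) :=
  Module.Invertible.rTensorEquiv (Module.Dual S X) S
      (TensorProduct.comm S P (Module.Dual S P) ≪≫ₗ Module.Invertible.linearEquiv S P) ≪≫ₗ
    (LinearEquiv.ofBijective (dualTensorHom S X P)
      dualTensorHom_bijective_of_finite_projective_right).arrowCongr (TensorProduct.lid S P)

variable {S P X} in
theorem bidualEquivHomHom_apply_dualTensorHom (Φ : Module.Dual S (Module.Dual S X))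
    (t : Module.Dual S X ⊗[S] P) :
    bidualEquivHomHom S P X Φ (dualTensorHom S X P t) =
      TensorProduct.lid S P (Φ.rTensor P t) := by
  simp only [bidualEquivHomHom, LinearEquiv.trans_apply, LinearEquiv.arrowCongr_apply,
    LinearEquiv.ofBijective_symm_apply_apply]
  rfl

theorem bidualEquivHomHom_comp_eval :
    bidualEquivHomHom S P X ∘ Module.Dual.eval S X =
      (LinearMap.applyₗ : X →ₗ[S] (X →ₗ[S] P) →ₗ[S] P) := by
  funext x
  have hsurj : Function.Surjective (dualTensorHom S X P) :=
    dualTensorHom_bijective_of_finite_projective_right.surjective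
  rw [← LinearMap.cancel_right hsurj]
  refine TensorProduct.ext' fun f p ↦ ?_
  simp [bidualEquivHomHom_apply_dualTensorHom]

theorem reflexive_iff_P_reflexive_general :
    (Function.Bijective (Module.Dual.eval S X) ↔
      Function.Bijective (LinearMap.applyₗ : X →ₗ[S] (X →ₗ[S] P) →ₗ[S] P)) ∧
    (Function.Injective (Module.Dual.eval S X) ↔
      Function.Injective (LinearMap.applyₗ : X →ₗ[S] (X →ₗ[S] P) →ₗ[S] P)) := by
  simp only [← bidualEquivHomHom_comp_eval, EquivLike.comp_bijective, EquivLike.comp_injective,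
    and_self]

end Invertible

theorem reflexive_iff_P_reflexive
    (S : Type u) [CommRing S]
    (P : Type w) [AddCommGroup P] [Module S P]
    -- P is invertible: there is an S-module Q with P ⊗[S] Q ≅ S
    (Q : Type x) [AddCommGroup Q] [Module S Q] (e : (P ⊗[S] Q) ≃ₗ[S] S)
    (X : Type v) [AddCommGroup X] [Module S X] :
    (Function.Bijective (evalFunP S X S) ↔ Function.Bijective (evalFunP S X P)) ∧
    (Function.Injective (evalFunP S X S) ↔ Function.Injective (evalFunP S X P)) := by
  have : Module.Invertible S P := Module.Invertible.left e
  exact reflexive_iff_P_reflexive_general S P X
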